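/- Let μ be a non-degenerate probability measure on ℝ satisfying E_μ[exp(λ|X|^p)] < ∞ for all λ > 0 with some p ∈ [1,∞]. Then the map t ↦ γ(β(t)), viewed as a function from cl(N) to the extended interval [0,∞], is continuous; in particular, if a := sup N < ∞ then γ(β(t)) → γ(+∞) = D(δ_a‖μ) = −log μ({a}) as t ↑ a, and if b := inf N > −∞ then γ(β(t)) → γ(−∞) = D(δ_b‖μ) = −log μ({b}) as t ↓ b. -/

import Mathlib

/-!
The function `γ ∘ β` is the Legendre transform of `α`, and the proof rests on two facts.

* Lower bound (`le_gb`): `θ t - α(θ) ≤ gb t` for all real `θ` and `t`. On `N` this is the tangent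
  line inequality for the convex function `α`; off `N` it is `e^{θ t} μ{t} ≤ ∫ e^{θ x} dμ`.
* At an endpoint `a` of `N` the lower bound is asymptotically sharp (`tendsto_affine_gb`): `μ` lives
  on one side of `a`, so `e^{α(θ) - θ a} = ∫ e^{θ (x - a)} dμ → μ{a}` by dominated convergence
  as `θ → ±∞`.

At an endpoint, lower semicontinuity follows since `gb` is bounded below by functions continuous
in `t` whose values at `a` exhaust `gb a`. For upper semicontinuity, if `t = α'(θ)` lies between
`α'(0)` and `a`, then `γ(θ) = θ t - α(θ) ≤ θ a - α(θ) ≤ gb a`. At points of `N`, continuity holds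
because `α'` is an open embedding (`α'' > 0` is the variance of a tilted measure) and `γ` is
continuous.

Both endpoints are treated at once through a sign `s` with `s * s = 1`: the condition
`s * x ≤ s * a` on `N` says that `a` is an upper bound if `s = 1` and a lower bound if `s = -1`.
-/

open MeasureTheory Filter Set
open scoped ENNReal NNReal

noncomputable section

namespace GibbsMulti

/-- The log moment generating function `α(θ) = log ∫ e^{θx} dμ(x)`. -/
def cgf (μ : Measure ℝ) (θ : ℝ) : ℝ := Real.log (∫ x, Real.exp (θ * x) ∂μ)

/-- `α'`, the derivative of the log-mgf. -/
def cgf' (μ : Measure ℝ) : ℝ → ℝ := deriv (cgf μ)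

/-- `N = α'(ℝ)`. -/
def Ndom (μ : Measure ℝ) : Set ℝ := Set.range (cgf' μ)

/-- `β`, the inverse of `α'` on `N`. -/
def betaInv (μ : Measure ℝ) : ℝ → ℝ := Function.invFun (cgf' μ)

/-- `γ(θ) = θ α'(θ) − α(θ)`. -/
def gammaFn (μ : Measure ℝ) (θ : ℝ) : ℝ := θ * cgf' μ θ - cgf μ θ

open Classical in
/-- The extended function `γ∘β : cl(N) → [0,∞]`, with values `D(δ_t‖μ) = −log μ({t})`
at the endpoints of `N` (which is `∞` when `μ({t}) = 0`). -/
def gb (μ : Measure ℝ) (t : ℝ) : ℝ≥0∞ :=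
  if t ∈ Ndom μ then ENNReal.ofReal (gammaFn μ (betaInv μ t))
  else if μ {t} = 0 then ⊤ else ENNReal.ofReal (- Real.log (μ {t}).toReal)

/-- `μ` is non-degenerate. -/
def Nondeg (μ : Measure ℝ) : Prop := ∀ c : ℝ, μ ≠ Measure.dirac c

/-- Tail condition with (finite) exponent `p`: `E_μ[exp(λ |X|^p)] < ∞` for every `λ > 0`. -/
def TailCond (μ : Measure ℝ) (p : ℝ) : Prop :=
  ∀ l : ℝ, 0 < l → Integrable (fun x => Real.exp (l * |x| ^ p)) μ

/-- `μ` is stochastically non-negative. -/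
def StochNonneg (μ : Measure ℝ) : Prop :=
  ∀ t : ℝ, 0 < t → -t ∈ Ndom μ →
    t ∈ Ndom μ ∧ gammaFn μ (betaInv μ t) ≤ gammaFn μ (betaInv μ (-t))

section

variable {μ : Measure ℝ}

/-! ### The log moment generating function -/

lemma integrable_exp_mul {p : ℝ} (hp : 1 ≤ p) (htail : TailCond μ p) (θ : ℝ) :
    Integrable (fun x => Real.exp (θ * x)) μ := by
  have h := (htail (|θ| + 1) (by positivity)).const_mul (Real.exp (|θ| + 1))
  refine h.mono' (by fun_prop) (ae_of_all _ fun x => ?_)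
  rw [Real.norm_eq_abs, Real.abs_exp, ← Real.exp_add]
  apply Real.exp_le_exp.2
  have h1 : |x| ≤ 1 + |x| ^ p := by
    rcases le_total |x| 1 with h | h
    · have := Real.rpow_nonneg (abs_nonneg x) p
      linarith
    · have := Real.rpow_le_rpow_of_exponent_le h hp
      rw [Real.rpow_one] at this
      linarith
  have h2 : θ * x ≤ |θ| * |x| := by
    rw [← abs_mul]
    exact le_abs_self _
  have h3 := Real.rpow_nonneg (abs_nonneg x) p
  nlinarith [abs_nonneg θ, abs_nonneg x]

lemma integrable_exp_mul_sub (hI : ∀ θ : ℝ, Integrable (fun x => Real.exp (θ * x)) μ)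
    (θ a : ℝ) : Integrable (fun x => Real.exp (θ * (x - a))) μ := by
  refine ((hI θ).mul_const (Real.exp (-(θ * a)))).congr (ae_of_all _ fun x => ?_)
  simp only [← Real.exp_add]
  ring_nf

lemma mem_interior_integrableExpSet (hI : ∀ θ : ℝ, Integrable (fun x => Real.exp (θ * x)) μ)
    (θ : ℝ) : θ ∈ interior (ProbabilityTheory.integrableExpSet id μ) := by
  have : ProbabilityTheory.integrableExpSet id μ = Set.univ := by
    ext t
    simpa [ProbabilityTheory.integrableExpSet] using hI t
  simp [this]

lemma analyticAt_cgf (hI : ∀ θ : ℝ, Integrable (fun x => Real.exp (θ * x)) μ) (θ : ℝ) :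
    AnalyticAt ℝ (cgf μ) θ :=
  ProbabilityTheory.analyticAt_cgf (mem_interior_integrableExpSet hI θ)

lemma ordConnected_Ndom (hI : ∀ θ : ℝ, Integrable (fun x => Real.exp (θ * x)) μ) :
    (Ndom μ).OrdConnected := by
  have hc : Continuous (cgf' μ) :=
    continuous_iff_continuousAt.2 fun θ => (analyticAt_cgf hI θ).deriv.continuousAt
  exact (isPreconnected_range hc).ordConnected

/-- A point outside the interval `N` bounds it from above (`s = 1`) or from below (`s = -1`). -/
lemma exists_sign (hI : ∀ θ : ℝ, Integrable (fun x => Real.exp (θ * x)) μ) {t : ℝ}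
    (ht : t ∉ Ndom μ) : ∃ s : ℝ, s * s = 1 ∧ ∀ x ∈ Ndom μ, s * x ≤ s * t := by
  by_cases h : ∀ x ∈ Ndom μ, x ≤ t
  · exact ⟨1, by norm_num, by simpa using h⟩
  · push Not at h
    obtain ⟨y, hy, hty⟩ := h
    refine ⟨-1, by norm_num, fun x hx => ?_⟩
    by_contra hlt
    exact ht ((ordConnected_Ndom hI).out hx hy ⟨by linarith, hty.le⟩)

variable [IsProbabilityMeasure μ]

/-- `α''(θ)` is the variance of the tilted measure `μ_θ`; it vanishes only if `μ_θ`, and hence the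
equivalent measure `μ`, is a point mass. -/
lemma deriv_cgf'_pos (hI : ∀ θ : ℝ, Integrable (fun x => Real.exp (θ * x)) μ) (hND : Nondeg μ)
    (θ : ℝ) : 0 < deriv (cgf' μ) θ := by
  have hθ := mem_interior_integrableExpSet hI θ
  have h1 : deriv (cgf' μ) θ =
      ProbabilityTheory.variance id (μ.tilted (fun x => θ * id x)) := by
    rw [ProbabilityTheory.variance_tilted_mul hθ, iteratedDeriv_succ, iteratedDeriv_one]
    rfl
  have hmem : MemLp id 2 (μ.tilted (fun x => θ * id x)) := by
    simpa using ProbabilityTheory.memLp_tilted_mul hθ 2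
  have : IsProbabilityMeasure (μ.tilted (fun x => θ * id x)) := isProbabilityMeasure_tilted (hI θ)
  rw [h1]
  refine lt_of_le_of_ne (ProbabilityTheory.variance_nonneg _ _) fun h0 => ?_
  have he := hmem.ofReal_variance_eq
  rw [← h0, ENNReal.ofReal_zero] at he
  have hae := (ProbabilityTheory.evariance_eq_zero_iff hmem.aestronglyMeasurable.aemeasurable).1
    he.symm
  have hae' := (absolutelyContinuous_tilted (f := fun x => θ * id x) (hI θ)).ae_le hae
  refine hND (∫ x, id x ∂μ.tilted (fun x => θ * id x)) ?_
  calc μ = μ.map id := Measure.map_id.symm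
    _ = μ.map (fun _ => _) := Measure.map_congr hae'
    _ = _ := by rw [Measure.map_const, measure_univ, one_smul]

lemma strictMono_cgf' (hI : ∀ θ : ℝ, Integrable (fun x => Real.exp (θ * x)) μ)
    (hND : Nondeg μ) : StrictMono (cgf' μ) :=
  strictMono_of_deriv_pos (deriv_cgf'_pos hI hND)

lemma isOpenEmbedding_cgf' (hI : ∀ θ : ℝ, Integrable (fun x => Real.exp (θ * x)) μ)
    (hND : Nondeg μ) : Topology.IsOpenEmbedding (cgf' μ) := by
  have ho : IsOpenMap (cgf' μ) :=
    isOpenMap_of_hasStrictDerivAt (f' := deriv (cgf' μ))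
      (fun {θ} => (analyticAt_cgf hI θ).deriv.hasStrictDerivAt)
      (fun {θ} => (deriv_cgf'_pos hI hND θ).ne')
  exact ⟨(strictMono_cgf' hI hND).isEmbedding_of_ordConnected (ordConnected_Ndom hI),
    ho.isOpen_range⟩

/-- `α` lies above each of its tangent lines. -/
lemma tangent_le_cgf (hI : ∀ θ : ℝ, Integrable (fun x => Real.exp (θ * x)) μ)
    (hND : Nondeg μ) (θ θ₀ : ℝ) : θ₀ * cgf' μ θ - cgf μ θ₀ ≤ gammaFn μ θ := by
  have hconv : ConvexOn ℝ Set.univ (cgf μ) :=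
    (strictMono_cgf' hI hND).monotone.convexOn_univ_of_deriv
      fun θ => (analyticAt_cgf hI θ).differentiableAt
  have hd : HasDerivAt (cgf μ) (cgf' μ θ) θ := (analyticAt_cgf hI θ).differentiableAt.hasDerivAt
  unfold gammaFn
  rcases lt_trichotomy θ θ₀ with h | h | h
  · have := hconv.le_slope_of_hasDerivAt (mem_univ _) (mem_univ _) h hd
    rw [slope_def_field, le_div_iff₀ (by linarith)] at this
    linarith
  · rw [h]
  · have := hconv.slope_le_of_hasDerivAt (mem_univ _) (mem_univ _) h hd
    rw [slope_def_field, div_le_iff₀ (by linarith)] at this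
    linarith

lemma exp_cgf_sub (hI : ∀ θ : ℝ, Integrable (fun x => Real.exp (θ * x)) μ) (θ a : ℝ) :
    Real.exp (cgf μ θ - θ * a) = ∫ x, Real.exp (θ * (x - a)) ∂μ := by
  have h1 : Real.exp (cgf μ θ) = ∫ x, Real.exp (θ * x) ∂μ := Real.exp_log (integral_exp_pos (hI θ))
  rw [sub_eq_add_neg, Real.exp_add, h1, ← integral_mul_const]
  congr 1 with x
  rw [← Real.exp_add]
  ring_nf

lemma measureReal_singleton_le (hI : ∀ θ : ℝ, Integrable (fun x => Real.exp (θ * x)) μ)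
    (θ a : ℝ) : μ.real {a} ≤ Real.exp (cgf μ θ - θ * a) := by
  rw [exp_cgf_sub hI]
  have := setIntegral_le_integral (s := {a}) (integrable_exp_mul_sub hI θ a)
    (ae_of_all _ fun x => (Real.exp_pos _).le)
  simpa [integral_singleton, measureReal_def] using this

/-! ### The extended function and its affine minorants -/

lemma gb_cgf' (hI : ∀ θ : ℝ, Integrable (fun x => Real.exp (θ * x)) μ) (hND : Nondeg μ)
    (θ : ℝ) : gb μ (cgf' μ θ) = ENNReal.ofReal (gammaFn μ θ) := by
  have : betaInv μ (cgf' μ θ) = θ :=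
    Function.leftInverse_invFun (strictMono_cgf' hI hND).injective θ
  rw [gb, if_pos (show cgf' μ θ ∈ Ndom μ from Set.mem_range_self θ), this]

lemma le_gb (hI : ∀ θ : ℝ, Integrable (fun x => Real.exp (θ * x)) μ) (hND : Nondeg μ)
    (θ t : ℝ) : ENNReal.ofReal (θ * t - cgf μ θ) ≤ gb μ t := by
  by_cases ht : t ∈ Ndom μ
  · obtain ⟨η, rfl⟩ := ht
    rw [gb_cgf' hI hND]
    exact ENNReal.ofReal_le_ofReal (tangent_le_cgf hI hND η θ)
  · rw [gb, if_neg ht]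
    split_ifs with h0
    · exact le_top
    · apply ENNReal.ofReal_le_ofReal
      have hpos : 0 < μ.real {t} := ENNReal.toReal_pos h0 (measure_ne_top _ _)
      have := (Real.log_le_iff_le_exp hpos).2 (measureReal_singleton_le hI θ t)
      change _ ≤ -Real.log (μ.real {t})
      linarith

lemma continuousAt_gb (hI : ∀ θ : ℝ, Integrable (fun x => Real.exp (θ * x)) μ)
    (hND : Nondeg μ) {t : ℝ} (ht : t ∈ Ndom μ) : ContinuousAt (fun t => gb μ t) t := by
  obtain ⟨θ, rfl⟩ := ht
  rw [ContinuousAt, ← (isOpenEmbedding_cgf' hI hND).map_nhds_eq, tendsto_map'_iff]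
  simp only [Function.comp_def, gb_cgf' hI hND]
  refine ENNReal.tendsto_ofReal ?_
  have h1 : ContinuousAt (cgf' μ) θ := (analyticAt_cgf hI θ).deriv.continuousAt
  exact (continuousAt_id.mul h1).sub (analyticAt_cgf hI θ).continuousAt

/-! ### Endpoints of `N` -/

/-- If `s α' ≤ s a` everywhere, then `∫ e^{s θ (x - a)} dμ ≤ 1` for all `θ ≥ 0`, so by Chernoff's
bound `μ` gives no mass to `{s (x - a) > 0}`. -/
lemma ae_mul_sub_nonpos (hI : ∀ θ : ℝ, Integrable (fun x => Real.exp (θ * x)) μ)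
    (hND : Nondeg μ) {s a : ℝ} (hb : ∀ x ∈ Ndom μ, s * x ≤ s * a) :
    ∀ᵐ x ∂μ, s * (x - a) ≤ 0 := by
  have hmgf : ∀ θ : ℝ, 0 ≤ θ → ProbabilityTheory.mgf (fun x => s * (x - a)) μ θ ≤ 1 := by
    intro θ hθ
    have h0 : cgf μ 0 = 0 := by simp [cgf]
    have h1 := tangent_le_cgf hI hND (θ * s) 0
    rw [gammaFn, h0] at h1
    have h2 := mul_le_mul_of_nonneg_left (hb _ (Set.mem_range_self (θ * s))) hθ
    have h3 : ProbabilityTheory.mgf (fun x => s * (x - a)) μ θ =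
        Real.exp (cgf μ (θ * s) - θ * s * a) := by
      rw [exp_cgf_sub hI, ProbabilityTheory.mgf]
      simp only [mul_assoc]
    rw [h3, Real.exp_le_one_iff]
    linarith
  have hzero : ∀ ε : ℝ, 0 < ε → μ {x | ε ≤ s * (x - a)} = 0 := by
    intro ε hε
    have hle : ∀ θ : ℝ, 0 ≤ θ → μ.real {x | ε ≤ s * (x - a)} ≤ Real.exp (-(θ * ε)) := by
      intro θ hθ
      have hint : Integrable (fun x => Real.exp (θ * (s * (x - a)))) μ := by
        simpa only [mul_assoc] using integrable_exp_mul_sub hI (θ * s) a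
      have h1 := ProbabilityTheory.measure_ge_le_exp_mul_mgf (X := fun x => s * (x - a)) ε hθ hint
      calc _ ≤ _ := h1
        _ ≤ Real.exp (-θ * ε) * 1 := by
          gcongr
          exact hmgf θ hθ
        _ = _ := by rw [mul_one, neg_mul]
    have hlim : Tendsto (fun θ : ℝ => Real.exp (-(θ * ε))) atTop (nhds 0) :=
      Real.tendsto_exp_neg_atTop_nhds_zero.comp (tendsto_id.atTop_mul_const hε)
    have h0 : μ.real {x | ε ≤ s * (x - a)} ≤ 0 :=
      ge_of_tendsto hlim ((eventually_ge_atTop 0).mono hle)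
    exact (measureReal_eq_zero_iff).1 (le_antisymm h0 measureReal_nonneg)
  have hall : ∀ᵐ x ∂μ, ∀ n : ℕ, s * (x - a) < 1 / ((n : ℝ) + 1) := by
    rw [ae_all_iff]
    intro n
    rw [ae_iff]
    simpa using hzero (1 / ((n : ℝ) + 1)) (by positivity)
  filter_upwards [hall] with x hx
  by_contra hlt
  obtain ⟨n, hn⟩ := exists_nat_one_div_lt (not_le.1 hlt)
  exact absurd (hx n) (not_lt.2 hn.le)

lemma tendsto_exp_cgf_sub (hI : ∀ θ : ℝ, Integrable (fun x => Real.exp (θ * x)) μ)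
    (hND : Nondeg μ) {s a : ℝ} (hs : s * s = 1) (hb : ∀ x ∈ Ndom μ, s * x ≤ s * a) :
    Tendsto (fun θ : ℝ => Real.exp (cgf μ (θ * s) - θ * s * a)) atTop (nhds (μ.real {a})) := by
  have hae := ae_mul_sub_nonpos hI hND hb
  have hlim : ∫ x, ({a} : Set ℝ).indicator (fun _ => (1 : ℝ)) x ∂μ = μ.real {a} := by
    rw [integral_indicator_const _ (measurableSet_singleton a), smul_eq_mul, mul_one]
  rw [← hlim]
  simp only [exp_cgf_sub hI]
  refine tendsto_integral_filter_of_dominated_convergence (fun _ => (1 : ℝ))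
    (Eventually.of_forall fun θ => (integrable_exp_mul_sub hI _ _).aestronglyMeasurable)
    ?_ (integrable_const _) ?_
  · filter_upwards [eventually_ge_atTop 0] with θ hθ
    filter_upwards [hae] with x hx
    rw [Real.norm_eq_abs, Real.abs_exp, Real.exp_le_one_iff, mul_assoc]
    exact mul_nonpos_of_nonneg_of_nonpos hθ hx
  · filter_upwards [hae] with x hx
    by_cases hxa : x = a
    · simp [hxa]
    · have hs0 : s ≠ 0 := by
        rintro rfl
        norm_num at hs
      have hneg : s * (x - a) < 0 :=
        lt_of_le_of_ne hx (mul_ne_zero hs0 (sub_ne_zero.2 hxa))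
      rw [Set.indicator_of_notMem (by simpa using hxa)]
      simp only [mul_assoc]
      exact Real.tendsto_exp_atBot.comp (tendsto_id.atTop_mul_const_of_neg hneg)

/-- The lower bound `le_gb` is asymptotically attained at an endpoint of `N`. -/
lemma tendsto_affine_gb (hI : ∀ θ : ℝ, Integrable (fun x => Real.exp (θ * x)) μ)
    (hND : Nondeg μ) {s a : ℝ} (hs : s * s = 1) (hb : ∀ x ∈ Ndom μ, s * x ≤ s * a)
    (ha : a ∉ Ndom μ) :
    Tendsto (fun θ : ℝ => ENNReal.ofReal (θ * s * a - cgf μ (θ * s))) atTop (nhds (gb μ a)) := by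
  have hlim := tendsto_exp_cgf_sub hI hND hs hb
  have heq : ∀ θ : ℝ, θ * s * a - cgf μ (θ * s) =
      -Real.log (Real.exp (cgf μ (θ * s) - θ * s * a)) := by
    intro θ
    rw [Real.log_exp]
    ring
  simp only [heq]
  rw [gb, if_neg ha]
  split_ifs with h0
  · have h0' : μ.real {a} = 0 := by simp [measureReal_def, h0]
    rw [h0'] at hlim
    refine ENNReal.tendsto_ofReal_atTop.comp (tendsto_neg_atBot_atTop.comp
      (Real.tendsto_log_nhdsGT_zero.comp (tendsto_nhdsWithin_iff.2 ⟨hlim, ?_⟩)))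
    exact Eventually.of_forall fun θ => Real.exp_pos _
  · have hpos : 0 < μ.real {a} := ENNReal.toReal_pos h0 (measure_ne_top _ _)
    exact ENNReal.tendsto_ofReal (hlim.log hpos.ne').neg

/-- On the part of `cl(N)` between `α'(0)` and the endpoint `a`, `gb` is at most `gb a`. -/
lemma gb_le_endpoint (hI : ∀ θ : ℝ, Integrable (fun x => Real.exp (θ * x)) μ)
    (hND : Nondeg μ) {s a : ℝ} (hs : s * s = 1) (hb : ∀ x ∈ Ndom μ, s * x ≤ s * a)
    (hacl : a ∈ closure (Ndom μ)) {t : ℝ} (htcl : t ∈ closure (Ndom μ))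
    (ht : s * cgf' μ 0 < s * t) : gb μ t ≤ gb μ a := by
  have hs' : s = 1 ∨ s = -1 := mul_self_eq_one_iff.1 hs
  by_cases htN : t ∈ Ndom μ
  · obtain ⟨θ, rfl⟩ := htN
    rw [gb_cgf' hI hND]
    refine le_trans (ENNReal.ofReal_le_ofReal ?_) (le_gb hI hND θ a)
    have hba := hb _ (Set.mem_range_self θ)
    unfold gammaFn
    rcases hs' with rfl | rfl
    · have hθ : 0 < θ := (strictMono_cgf' hI hND).lt_iff_lt.1 (by linarith)
      nlinarith
    · have hθ : θ < 0 := (strictMono_cgf' hI hND).lt_iff_lt.1 (by linarith)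
      nlinarith
  -- Off `N`, `t` is an endpoint on the same side of `α'(0)` as `a`, hence `t = a`.
  · have hcl : ∀ {r b : ℝ}, (∀ x ∈ Ndom μ, r * x ≤ r * b) →
        ∀ x ∈ closure (Ndom μ), r * x ≤ r * b := by
      intro r b h x hx
      exact closure_minimal (s := Ndom μ) (t := {x | r * x ≤ r * b}) h
        (isClosed_le (by fun_prop) (by fun_prop)) hx
    obtain ⟨r, hr, hrt⟩ := exists_sign hI htN
    have h0 := hrt _ (Set.mem_range_self 0)
    have h1 := hcl hb t htcl
    have h2 := hcl hrt a hacl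
    have : t = a := by
      rcases hs' with rfl | rfl <;> rcases mul_self_eq_one_iff.1 hr with rfl | rfl <;> linarith
    rw [this]

lemma continuousWithinAt_gb_endpoint
    (hI : ∀ θ : ℝ, Integrable (fun x => Real.exp (θ * x)) μ) (hND : Nondeg μ) {a : ℝ}
    (hacl : a ∈ closure (Ndom μ)) (ha : a ∉ Ndom μ) :
    ContinuousWithinAt (fun t => gb μ t) (closure (Ndom μ)) a := by
  obtain ⟨s, hs, hb⟩ := exists_sign hI ha
  refine tendsto_order.2 ⟨fun c hc => ?_, fun c hc => ?_⟩
  · obtain ⟨θ, hθ⟩ := ((tendsto_affine_gb hI hND hs hb ha).eventually_const_lt hc).exists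
    have hcont : Continuous fun t : ℝ => ENNReal.ofReal (θ * s * t - cgf μ (θ * s)) :=
      ENNReal.continuous_ofReal.comp (by fun_prop)
    filter_upwards [mem_nhdsWithin_of_mem_nhds (hcont.continuousAt.eventually_const_lt hθ)]
      with t ht
    exact lt_of_lt_of_le ht (le_gb hI hND _ t)
  · have hs0 : s ≠ 0 := by
      rintro rfl
      norm_num at hs
    have h0 : s * cgf' μ 0 < s * a := by
      refine lt_of_le_of_ne (hb _ (Set.mem_range_self 0)) fun h => ha ?_
      rw [← mul_left_cancel₀ hs0 h]
      exact Set.mem_range_self 0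
    have hev : ∀ᶠ t in nhds a, s * cgf' μ 0 < s * t :=
      (continuous_const.mul continuous_id).continuousAt.eventually_const_lt h0
    filter_upwards [mem_nhdsWithin_of_mem_nhds hev, self_mem_nhdsWithin] with t ht htcl
    exact lt_of_le_of_lt (gb_le_endpoint hI hND hs hb hacl htcl ht) hc

end

/-- `t ↦ γ(β(t))` is continuous from `cl(N)` to `[0,∞]`; in particular
its values approach the endpoint values `D(δ_{sup N}‖μ)` resp. `D(δ_{inf N}‖μ)` (which
equal `−log μ({·})`, by definition of `gb`) as `t` approaches a finite endpoint of `N`. -/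
theorem statement8
    (μ : Measure ℝ) [IsProbabilityMeasure μ] (hND : Nondeg μ)
    (p : ℝ) (hp : 1 ≤ p) (htail : TailCond μ p) :
    ContinuousOn (fun t => gb μ t) (closure (Ndom μ)) ∧
    (BddAbove (Ndom μ) →
      Filter.Tendsto (fun t => gb μ t) (nhdsWithin (sSup (Ndom μ)) (Ndom μ))
        (nhds (gb μ (sSup (Ndom μ))))) ∧
    (BddBelow (Ndom μ) →
      Filter.Tendsto (fun t => gb μ t) (nhdsWithin (sInf (Ndom μ)) (Ndom μ))
        (nhds (gb μ (sInf (Ndom μ))))) := by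
  have hI := integrable_exp_mul hp htail
  have hc : ContinuousOn (fun t => gb μ t) (closure (Ndom μ)) := by
    intro t ht
    by_cases htN : t ∈ Ndom μ
    · exact (continuousAt_gb hI hND htN).continuousWithinAt
    · exact continuousWithinAt_gb_endpoint hI hND ht htN
  have hne : (Ndom μ).Nonempty := Set.range_nonempty _
  exact ⟨hc, fun h => (hc _ (csSup_mem_closure hne h)).mono subset_closure,
    fun h => (hc _ (csInf_mem_closure hne h)).mono subset_closure⟩

end GibbsMulti
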